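/- For every integer k ≥ 0: (v_{k−ℓ} − r_{k−ℓ}) + (v_{k−ℓ+1} − r_{k−ℓ+1}) ≤ (m_k − b_k) + (m_{k−ℓ+1} − b_{k−ℓ+1}). -/

import Mathlib

open LinearMap Module

noncomputable section

namespace ConeMorse

variable (A : ℤ → Type) [∀ i, AddCommGroup (A i)] [∀ i, Module ℝ (A i)]

/-- Transport along an equality of indices. -/
def lcast {m k : ℤ} (h : m = k) : A m →ₗ[ℝ] A k where
  toFun x := h ▸ x
  map_add' x y := by subst h; rfl
  map_smul' c x := by subst h; rfl

variable (d : ∀ i, A i →ₗ[ℝ] A (i + 1))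

/-- Cocycles in degree `i`. -/
def cocycles (i : ℤ) : Submodule ℝ (A i) := ker (d i)

/-- Coboundaries in degree `i`: the image of `d : A^{i-1} → A^i`. -/
def cobound (i : ℤ) : Submodule ℝ (A i) :=
  range ((lcast A (show i - 1 + 1 = i by ring)).comp (d (i - 1)))

/-- Cohomology in degree `i`: cocycles modulo coboundaries. -/
abbrev Hcoh (i : ℤ) :=
  cocycles A d i ⧸ Submodule.comap (cocycles A d i).subtype (cobound A d i)

section OneComplex

variable (ℓ : ℤ) (φ : ∀ i, A i →ₗ[ℝ] A (i + ℓ))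

/-- The cone differential `∂_C (a, b) = (∂ a + φ b, (−1)^{ℓ−1} ∂ b)` on
`Cone^i(φ) = A^i ⊕ A^{i−ℓ+1}`. -/
def coneD (i : ℤ) : (A i × A (i - ℓ + 1)) →ₗ[ℝ] (A (i + 1) × A (i + 1 - ℓ + 1)) :=
  LinearMap.prod
    ((d i).comp (LinearMap.fst ℝ (A i) (A (i - ℓ + 1))) +
      (lcast A (show i - ℓ + 1 + ℓ = i + 1 by ring)).comp
        ((φ (i - ℓ + 1)).comp (LinearMap.snd ℝ (A i) (A (i - ℓ + 1)))))
    (((-1 : ℝ) ^ (ℓ - 1)) •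
      ((lcast A (show i - ℓ + 1 + 1 = i + 1 - ℓ + 1 by ring)).comp
        ((d (i - ℓ + 1)).comp (LinearMap.snd ℝ (A i) (A (i - ℓ + 1))))))

variable [∀ i, FiniteDimensional ℝ (A i)]

/-- `m_k`: the dimension of the cochain group in degree `k`. -/
def mnum (k : ℤ) : ℕ := finrank ℝ (A k)

/-- `b_k`: the dimension of the cohomology in degree `k`. -/
def bnum (k : ℤ) : ℕ := finrank ℝ (Hcoh A d k)

/-- `v_k`: the rank of `φ : A^k → A^{k+ℓ}`. -/
def vnum (k : ℤ) : ℕ := finrank ℝ (range (φ k))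

/-- `r_k`: the rank of the induced map `[φ] : H^k → H^{k+ℓ}`, computed as the dimension of
`φ(Z^k)/(φ(Z^k) ∩ B^{k+ℓ})`. -/
def rnum (k : ℤ) : ℕ :=
  finrank ℝ ((Submodule.map (φ k) (cocycles A d k)) ⧸
    Submodule.comap (Submodule.map (φ k) (cocycles A d k)).subtype (cobound A d (k + ℓ)))

/-- `b^φ_k`: the dimension of the cone cohomology in degree `k`. -/
def bphi (k : ℤ) : ℕ :=
  finrank ℝ (Hcoh (fun i => A i × A (i - ℓ + 1)) (coneD A d ℓ φ) k)

end OneComplex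

end ConeMorse

open ConeMorse

namespace ConeMorse

theorem aux_lcast_inj (A : ℤ → Type) [∀ i, AddCommGroup (A i)] [∀ i, Module ℝ (A i)]
    {m k : ℤ} (h : m = k) : Function.Injective (lcast A h) := by
  subst h
  intro x y hxy
  exact hxy

theorem aux_quot {V : Type} [AddCommGroup V] [Module ℝ V] [FiniteDimensional ℝ V]
    (Z B : Submodule ℝ V) :
    finrank ℝ (Z ⧸ Submodule.comap Z.subtype B) + finrank ℝ (Z ⊓ B : Submodule ℝ V)
      = finrank ℝ Z := by
  have h := Submodule.finrank_quotient_add_finrank (Submodule.comap Z.subtype B)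
  have h2 : finrank ℝ (Submodule.comap Z.subtype B) = finrank ℝ (Z ⊓ B : Submodule ℝ V) := by
    rw [← Submodule.map_comap_subtype]
    exact (Submodule.finrank_map_subtype_eq Z _).symm
  omega

theorem aux_map {V W : Type} [AddCommGroup V] [Module ℝ V] [FiniteDimensional ℝ V]
    [AddCommGroup W] [Module ℝ W] [FiniteDimensional ℝ W]
    (f : V →ₗ[ℝ] W) (Z : Submodule ℝ V) :
    finrank ℝ (range f) + finrank ℝ Z ≤ finrank ℝ (Submodule.map f Z) + finrank ℝ V := by
  have h1 := LinearMap.finrank_range_add_finrank_ker f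
  have h2 := LinearMap.finrank_range_add_finrank_ker (f.domRestrict Z)
  rw [LinearMap.range_domRestrict, LinearMap.ker_domRestrict] at h2
  have h3 : finrank ℝ (Submodule.comap Z.subtype (ker f)) ≤ finrank ℝ (ker f) := by
    rw [← Submodule.finrank_map_subtype_eq Z, Submodule.map_comap_subtype]
    exact Submodule.finrank_mono inf_le_right
  have h4 : finrank ℝ (Submodule.comap Z.subtype (ker f)) = _ := rfl
  omega

theorem aux_cobound (A : ℤ → Type) [∀ i, AddCommGroup (A i)] [∀ i, Module ℝ (A i)]
    (d : ∀ i, A i →ₗ[ℝ] A (i + 1)) (p q : ℤ) (h : p + 1 = q) :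
    finrank ℝ (cobound A d q) = finrank ℝ (range (d p)) := by
  obtain rfl : p = q - 1 := by omega
  unfold cobound
  rw [LinearMap.range_comp]
  exact (LinearEquiv.finrank_eq (Submodule.equivMapOfInjective _ (aux_lcast_inj A _) _)).symm

theorem aux_le (A : ℤ → Type) [∀ i, AddCommGroup (A i)] [∀ i, Module ℝ (A i)]
    (d : ∀ i, A i →ₗ[ℝ] A (i + 1)) (hd : ∀ i, (d (i + 1)).comp (d i) = 0) (q : ℤ) :
    cobound A d q ≤ cocycles A d q := by
  have key : ∀ (p q : ℤ) (h : p + 1 = q) (x : A p), d q (lcast A h (d p x)) = 0 := by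
    intro p q h x
    subst h
    exact LinearMap.congr_fun (hd p) x
  rintro _ ⟨x, rfl⟩
  exact key _ _ _ x

theorem aux_mb (A : ℤ → Type) [∀ i, AddCommGroup (A i)] [∀ i, Module ℝ (A i)]
    [∀ i, FiniteDimensional ℝ (A i)]
    (d : ∀ i, A i →ₗ[ℝ] A (i + 1)) (hd : ∀ i, (d (i + 1)).comp (d i) = 0) (q : ℤ) :
    mnum A q = bnum A d q + finrank ℝ (range (d q)) + finrank ℝ (cobound A d q) := by
  have h1 : finrank ℝ (Hcoh A d q) + _ = _ := aux_quot (cocycles A d q) (cobound A d q)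
  rw [inf_eq_right.mpr (aux_le A d hd q)] at h1
  have h2 := LinearMap.finrank_range_add_finrank_ker (d q)
  change _ + finrank ℝ (cocycles A d q) = _ at h2
  unfold mnum bnum
  omega

theorem aux_vr (A : ℤ → Type) [∀ i, AddCommGroup (A i)] [∀ i, Module ℝ (A i)]
    [∀ i, FiniteDimensional ℝ (A i)]
    (d : ∀ i, A i →ₗ[ℝ] A (i + 1)) (ℓ : ℤ) (φ : ∀ i, A i →ₗ[ℝ] A (i + ℓ)) (q : ℤ) :
    vnum A ℓ φ q ≤
      rnum A d ℓ φ q + finrank ℝ (range (d q)) + finrank ℝ (cobound A d (q + ℓ)) := by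
  have h1 := aux_quot (Submodule.map (φ q) (cocycles A d q)) (cobound A d (q + ℓ))
  have h2 := LinearMap.finrank_range_add_finrank_ker (d q)
  have h3 := aux_map (φ q) (cocycles A d q)
  have h4 : finrank ℝ (Submodule.map (φ q) (cocycles A d q) ⊓ cobound A d (q + ℓ) :
      Submodule ℝ (A (q + ℓ))) ≤ finrank ℝ (cobound A d (q + ℓ)) :=
    Submodule.finrank_mono inf_le_right
  unfold vnum rnum
  unfold cocycles at *
  omega

end ConeMorse

/-- STATEMENT 10: for every integer `k ≥ 0`,
`(v_{k−ℓ} − r_{k−ℓ}) + (v_{k−ℓ+1} − r_{k−ℓ+1}) ≤ (m_k − b_k) + (m_{k−ℓ+1} − b_{k−ℓ+1})`. -/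
theorem rank_deviation_bound
    (n ℓ : ℤ) (hn : 0 ≤ n) (hℓ : 1 ≤ ℓ)
    (C : ℤ → Type) [∀ i, AddCommGroup (C i)] [∀ i, Module ℝ (C i)]
    [∀ i, FiniteDimensional ℝ (C i)]
    (hC : ∀ i, i < 0 ∨ n < i → Subsingleton (C i))
    (d : ∀ i, C i →ₗ[ℝ] C (i + 1))
    (hd : ∀ i, (d (i + 1)).comp (d i) = 0)
    (φ : ∀ i, C i →ₗ[ℝ] C (i + ℓ))
    (hφ : ∀ i, (d (i + ℓ)).comp (φ i) =
      ((-1 : ℝ) ^ ℓ) • (lcast C (show i + 1 + ℓ = i + ℓ + 1 by ring)).comp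
        ((φ (i + 1)).comp (d i))) :
    ∀ k : ℤ, 0 ≤ k →
      ((vnum C ℓ φ (k - ℓ) : ℤ) - rnum C d ℓ φ (k - ℓ)) +
          ((vnum C ℓ φ (k - ℓ + 1) : ℤ) - rnum C d ℓ φ (k - ℓ + 1)) ≤
        ((mnum C k : ℤ) - bnum C d k) +
          ((mnum C (k - ℓ + 1) : ℤ) - bnum C d (k - ℓ + 1)) := by
  intro k _
  have h1 := aux_vr C d ℓ φ (k - ℓ)
  have h2 := aux_vr C d ℓ φ (k - ℓ + 1)
  have h3 := aux_mb C d hd k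
  have h4 := aux_mb C d hd (k - ℓ + 1)
  have e1 := aux_cobound C d (k - 1 + 1 - 1) (k - ℓ + ℓ) (by ring)
  have e2 := aux_cobound C d (k - 1 + 1 - 1) k (by ring)
  have e3 := aux_cobound C d k (k - ℓ + 1 + ℓ) (by ring)
  have e4 := aux_cobound C d (k - ℓ) (k - ℓ + 1) rfl
  omega
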